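/- Koszul syzygies of the Jacobian ideal: if g₁,…,gₙ ∈ R satisfy Σ_{i=1}^n ∂ᵢ(f)·gᵢ = 0, then the vector (g₁,…,gₙ) ∈ R^n lies in the R-submodule of R^n generated by the Koszul relations ∂ⱼ(f)·eᵢ − ∂ᵢ(f)·eⱼ for 1 ≤ i < j ≤ n, where e₁,…,eₙ denotes the standard basis of the free module R^n. -/

import Mathlib

noncomputable section

/-- The formal partial derivative `∂ᵢ` on `ℂ[[x₁,…,xₙ]]`, determined by
`coeff α (∂ᵢ g) = (α i + 1) • coeff (α + eᵢ) g`. -/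
def pd {σ : Type*} (i : σ) (g : MvPowerSeries σ ℂ) : MvPowerSeries σ ℂ :=
  fun α => ((α i : ℂ) + 1) * MvPowerSeries.coeff (α + Finsupp.single i 1) g

lemma coeff_pd {σ : Type*} (i : σ) (g : MvPowerSeries σ ℂ) (α : σ →₀ ℕ) :
    MvPowerSeries.coeff α (pd i g) =
      ((α i : ℂ) + 1) * MvPowerSeries.coeff (α + Finsupp.single i 1) g := rfl

/-- The Jacobian ideal `J(f) = ⟨∂₁f,…,∂ₙf⟩` of `f`. -/
def Jf (n : ℕ) (f : MvPowerSeries (Fin n) ℂ) : Ideal (MvPowerSeries (Fin n) ℂ) :=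
  Ideal.span (Set.range fun i : Fin n => pd i f)

/-- The maximal ideal `⟨x₁,…,xₙ⟩` of `ℂ[[x₁,…,xₙ]]`. -/
def mx (n : ℕ) : Ideal (MvPowerSeries (Fin n) ℂ) :=
  Ideal.span (Set.range (MvPowerSeries.X : Fin n → MvPowerSeries (Fin n) ℂ))


open Module in
lemma free_mem_smul_top_iff {R N ι : Type*} [CommRing R] [AddCommGroup N] [Module R N]
    (b : Basis ι R N) (I : Ideal R) (x : N) :
    x ∈ I • (⊤ : Submodule R N) ↔ ∀ i, b.repr x i ∈ I := by
  constructor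
  · intro h i
    refine Submodule.smul_induction_on h ?_ ?_
    · intro r hr y _
      simpa using I.mul_mem_right _ hr
    · intro y z hy hz
      simpa using I.add_mem hy hz
  · intro h
    rw [← b.linearCombination_repr x, Finsupp.linearCombination_apply]
    exact Submodule.sum_mem _ fun i _ => Submodule.smul_mem_smul (h i) trivial

lemma free_colon {R E : Type*} [CommRing R] [AddCommGroup E] [Module R E]
    (K : Submodule R E) [Module.Free R K] (I : Ideal R) (a : R)
    (ha : ∀ x, a * x ∈ I → x ∈ I) (x : E) (hx : x ∈ K) (h : a • x ∈ I • K) : x ∈ I • K := by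
  have h1 := (Submodule.mem_smul_top_iff I K (a • ⟨x, hx⟩)).2 h
  refine (Submodule.mem_smul_top_iff I K ⟨x, hx⟩).1 ?_
  rw [free_mem_smul_top_iff (Module.Free.chooseBasis R K)] at h1 ⊢
  intro i
  refine ha _ ?_
  have h2 := h1 i
  rwa [map_smul, Finsupp.smul_apply, smul_eq_mul] at h2

lemma koszul_step {R E : Type*} [CommRing R] [AddCommGroup E] [Module R E]
    (d : E →ₗ[R] E) (hdd : ∀ x, d (d x) = 0)
    (K : ℕ → Submodule R E) [∀ i, Module.Free R (K i)]
    (hdK : ∀ i, ∀ x ∈ K (i + 1), d x ∈ K i)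
    (I I' : Ideal R) (a : R) (hI' : I' = I ⊔ Ideal.span {a})
    (ha : ∀ x, a * x ∈ I → x ∈ I)
    (h : E →ₗ[R] E) (hhK : ∀ i, ∀ x ∈ K i, h x ∈ K (i + 1))
    (hdh : ∀ x, d (h x) = a • x - h (d x)) (i : ℕ)
    (hP : ∀ x ∈ K (i + 2), d x ∈ I' • K (i + 1) →
      x ∈ (K (i + 3)).map d ⊔ I' • K (i + 2))
    (x : E) (hx : x ∈ K (i + 1)) (hdx : d x ∈ I • K i) :
    x ∈ (K (i + 2)).map d ⊔ I • K (i + 1) := by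
  have haI : a ∈ I' := hI' ▸ Ideal.mem_sup_right (Ideal.mem_span_singleton_self a)
  have hII : I ≤ I' := hI' ▸ le_sup_left
  have hhdx : h (d x) ∈ I • K (i + 1) := by
    have h1 := Submodule.mem_map_of_mem (f := h) hdx
    rw [Submodule.map_smul''] at h1
    exact Submodule.smul_mono le_rfl (Submodule.map_le_iff_le_comap.2 (hhK i)) h1
  have h2 := hP (h x) (hhK _ _ hx) (by
    rw [hdh]
    exact Submodule.sub_mem _ (Submodule.smul_mem_smul haI hx)
      (Submodule.smul_mono_left hII hhdx))
  rw [hI', Submodule.sup_smul, Submodule.ideal_span_singleton_smul] at h2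
  obtain ⟨_, ⟨θ, hθ, rfl⟩, u, hu, hsum⟩ := Submodule.mem_sup.1 h2
  obtain ⟨v, hv, w, hw, rfl⟩ := Submodule.mem_sup.1 hu
  obtain ⟨ρ, hρ, rfl⟩ := (Submodule.mem_smul_pointwise_iff_exists _ _ _).1 hw
  have hdv : d v ∈ I • K (i + 1) := by
    have h1 := Submodule.mem_map_of_mem (f := d) hv
    rw [Submodule.map_smul''] at h1
    exact Submodule.smul_mono le_rfl (Submodule.map_le_iff_le_comap.2 (hdK (i + 1))) h1
  have key : a • (x - d ρ) = d v + h (d x) := by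
    have := congrArg d hsum
    rw [hdh, map_add, map_add, hdd, map_smul, zero_add] at this
    rw [smul_sub, sub_eq_iff_eq_add, add_right_comm, this]
    abel
  have h3 : x - d ρ ∈ I • K (i + 1) :=
    free_colon (K (i + 1)) I a ha _ (Submodule.sub_mem _ hx (hdK _ _ hρ))
      (key ▸ Submodule.add_mem _ hdv hhdx)
  exact Submodule.mem_sup.2 ⟨d ρ, ⟨ρ, hρ, rfl⟩, _, h3, by abel⟩

section ext
variable {R : Type*} [CommRing R] {n : ℕ}

lemma contract_mem {M : Type*} [AddCommGroup M] [Module R M] (φ : Module.Dual R M) (i : ℕ) :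
    ∀ x ∈ ⋀[R]^(i + 1) M,
      (CliffordAlgebra.contractLeft (Q := (0 : QuadraticForm R M)) φ x) ∈ ⋀[R]^i M := by
  induction i with
  | zero =>
    intro x hx
    rw [ExteriorAlgebra.exteriorPower, zero_add, pow_one] at hx
    obtain ⟨m, rfl⟩ := hx
    erw [CliffordAlgebra.contractLeft_ι]
    rw [ExteriorAlgebra.exteriorPower, pow_zero]
    exact Submodule.algebraMap_mem _
  | succ i ih =>
    intro x hx
    rw [ExteriorAlgebra.exteriorPower, pow_succ'] at hx
    refine Submodule.mul_induction_on hx ?_ ?_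
    · rintro _ ⟨m, rfl⟩ y hy
      erw [CliffordAlgebra.contractLeft_ι_mul]
      refine Submodule.sub_mem _ (Submodule.smul_mem _ _ hy) ?_
      rw [ExteriorAlgebra.exteriorPower, pow_succ']
      exact Submodule.mul_mem_mul ⟨m, rfl⟩ (ih y hy)
    · intro y z hy hz
      rw [map_add]
      exact Submodule.add_mem _ hy hz

/-- the Koszul H₁ vanishes -/
lemma koszul_h1 (F : Fin n → R) (I : ℕ → Ideal R) (a : Fin n → R)
    (hI0 : I 0 = ⊥) (hI : ∀ k : Fin n, I (k + 1) = I k ⊔ Ideal.span {a k})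
    (ha : ∀ k : Fin n, ∀ x, a k * x ∈ I k → x ∈ I k)
    (haF : ∀ k, a k ∈ Ideal.span (Set.range F))
    (g : Fin n → R) (hg : ∑ i, F i * g i = 0) :
    ∃ θ ∈ ⋀[R]^2 (Fin n → R),
      CliffordAlgebra.contractLeft (Q := (0 : QuadraticForm R (Fin n → R)))
        (Fintype.linearCombination R F) θ = ExteriorAlgebra.ι R g := by
  rcases subsingleton_or_nontrivial R with hR | hR
  · have := Module.subsingleton R (ExteriorAlgebra R (Fin n → R))
    exact ⟨0, Submodule.zero_mem _, Subsingleton.elim _ _⟩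
  let d : ExteriorAlgebra R (Fin n → R) →ₗ[R] ExteriorAlgebra R (Fin n → R) :=
    CliffordAlgebra.contractLeft (Q := (0 : QuadraticForm R (Fin n → R)))
        (Fintype.linearCombination R F)
  have hP : ∀ j k : ℕ, j + k = n → 
      ∀ x ∈ ⋀[R]^(k + 1) (Fin n → R), d x ∈ I k • ⋀[R]^k (Fin n → R) →
      x ∈ (⋀[R]^(k + 2) (Fin n → R)).map d ⊔ I k • ⋀[R]^(k + 1) (Fin n → R) := by
    intro j
    induction j with
    | zero =>
      intro k hk x hx _
      have hs : Subsingleton (⋀[R]^(k + 1) (Fin n → R)) := by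
        rw [← Module.finrank_eq_zero_iff_of_free (R := R), exteriorPower.finrank_eq]
        rw [Module.finrank_fin_fun]
        exact Nat.choose_eq_zero_of_lt (by omega)
      have : x = 0 := congrArg Subtype.val (hs.elim ⟨x, hx⟩ 0)
      rw [this]
      exact Submodule.zero_mem _
    | succ j ih =>
      intro k hk x hx hdx
      let k' : Fin n := ⟨k, by omega⟩
      obtain ⟨c, hc⟩ := (Ideal.mem_span_range_iff_exists_fun).1 (haF k')
      refine koszul_step d
        (CliffordAlgebra.contractLeft_contractLeft (Q := (0 : QuadraticForm R (Fin n → R))) _)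
        (fun i => ⋀[R]^i (Fin n → R)) (contract_mem _) (I k) (I (k + 1)) (a k') (hI k') (ha k')
        (LinearMap.mulLeft R (ExteriorAlgebra.ι R c)) ?_ ?_ k (ih (k + 1) (by omega)) x hx hdx
      · intro i y hy
        rw [ExteriorAlgebra.exteriorPower, pow_succ']
        exact Submodule.mul_mem_mul ⟨c, rfl⟩ hy
      · intro y
        have := CliffordAlgebra.contractLeft_ι_mul (Q := (0 : QuadraticForm R (Fin n → R)))
          (Fintype.linearCombination R F) c y
        have hca : Fintype.linearCombination R F c = a k' := by
          rw [← hc, Fintype.linearCombination_apply]; rfl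
        rw [hca] at this
        exact this
  have h0 := hP n 0 rfl (ExteriorAlgebra.ι R g)
    (by rw [ExteriorAlgebra.exteriorPower, zero_add, pow_one]; exact ⟨g, rfl⟩)
    (by
      have : d (ExteriorAlgebra.ι R g) = 0 := by
        refine (CliffordAlgebra.contractLeft_ι (0 : QuadraticForm R (Fin n → R)) _ g).trans ?_
        rw [Fintype.linearCombination_apply]
        simp only [smul_eq_mul, mul_comm (g _), hg, map_zero]
      rw [this]; exact Submodule.zero_mem _)
  rw [hI0, Submodule.bot_smul, sup_bot_eq] at h0
  exact h0

lemma koszul_gen [DecidableEq (Fin n)] (F : Fin n → R) (S : Submodule R (Fin n → R))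
    (hS : ∀ i j : Fin n, i < j → Pi.single i (F j) - Pi.single j (F i) ∈ S)
    (u v : Fin n → R) :
    Fintype.linearCombination R F u • v - Fintype.linearCombination R F v • u ∈ S := by
  have hS' : ∀ i j : Fin n, F j • Pi.single i (1 : R) - F i • Pi.single j (1 : R) ∈ S := by
    intro i j
    simp only [← Pi.single_smul, smul_eq_mul, mul_one]
    rcases lt_trichotomy i j with h | h | h
    · exact hS i j h
    · subst h; simp
    · have := S.neg_mem (hS j i h)
      rwa [neg_sub] at this
  have e : Fintype.linearCombination R F u • v - Fintype.linearCombination R F v • u =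
      ∑ i, ∑ j, (v i * u j) • (F j • Pi.single i (1 : R) - F i • Pi.single j (1 : R)) := by
    simp only [Fintype.linearCombination_apply, smul_eq_mul, smul_sub, Finset.sum_sub_distrib]
    ext k
    simp [Finset.sum_apply, Pi.single_apply, Finset.sum_mul, Finset.mul_sum]
    congr 1
    · exact Finset.sum_congr rfl fun i _ => by ring
    · exact Finset.sum_congr rfl fun i _ => by ring
  rw [e]
  exact Submodule.sum_mem _ fun i _ => Submodule.sum_mem _ fun j _ =>
    Submodule.smul_mem _ _ (hS' i j)

lemma koszul_final (F : Fin n → R) (S : Submodule R (Fin n → R))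
    (hS : ∀ i j : Fin n, i < j → Pi.single i (F j) - Pi.single j (F i) ∈ S)
    (g : Fin n → R)
    (h : ∃ θ ∈ ⋀[R]^2 (Fin n → R),
      CliffordAlgebra.contractLeft (Q := (0 : QuadraticForm R (Fin n → R)))
        (Fintype.linearCombination R F) θ = ExteriorAlgebra.ι R g) : g ∈ S := by
  obtain ⟨θ, hθ, e⟩ := h
  have : ExteriorAlgebra.ι R g ∈ S.map (ExteriorAlgebra.ι R) := by
    rw [← e]
    rw [ExteriorAlgebra.exteriorPower, pow_two] at hθ
    refine Submodule.mul_induction_on hθ ?_ ?_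
    · rintro _ ⟨u, rfl⟩ _ ⟨v, rfl⟩
      erw [CliffordAlgebra.contractLeft_ι_mul, CliffordAlgebra.contractLeft_ι]
      refine ⟨_, koszul_gen F S hS u v, ?_⟩
      rw [map_sub, map_smul, map_smul]
      congr 1
      rw [Algebra.smul_def]
      exact Algebra.commutes _ _
    · intro y z hy hz
      rw [map_add]
      exact Submodule.add_mem _ hy hz
  obtain ⟨g', hg', e'⟩ := this
  rwa [← (ExteriorAlgebra.ι_inj R g' g).1 e']
end ext

section series
open MvPowerSeries
variable {n : ℕ}

/-- The monomial ideal generated by the `m`-th powers of the first `k` variables. -/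
def powIdeal (n m k : ℕ) : Ideal (MvPowerSeries (Fin n) ℂ) where
  carrier := {h | ∀ α : Fin n →₀ ℕ, (∀ j : Fin n, (j : ℕ) < k → α j < m) → coeff α h = 0}
  add_mem' := by
    intro a b ha hb α hα
    rw [map_add, ha α hα, hb α hα, add_zero]
  zero_mem' := by intro α _; exact map_zero _
  smul_mem' := by
    intro c x hx α hα
    classical
    rw [smul_eq_mul, coeff_mul]
    refine Finset.sum_eq_zero fun p hp => ?_
    rw [Finset.HasAntidiagonal.mem_antidiagonal] at hp
    rw [hx p.2, mul_zero]
    intro j hj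
    have := hα j hj
    rw [← hp, Finsupp.add_apply] at this
    omega

lemma mem_powIdeal {m k : ℕ} {h : MvPowerSeries (Fin n) ℂ} : h ∈ powIdeal n m k ↔
    ∀ α : Fin n →₀ ℕ, (∀ j : Fin n, (j : ℕ) < k → α j < m) → coeff α h = 0 := Iff.rfl

lemma powIdeal_zero (m : ℕ) : powIdeal n m 0 = ⊥ := by
  rw [eq_bot_iff]
  intro h hh
  rw [Ideal.mem_bot]
  ext α
  exact hh α (by intro j hj; omega)

lemma powIdeal_reg (m : ℕ) (k : Fin n) (x : MvPowerSeries (Fin n) ℂ)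
    (hx : X k ^ m * x ∈ powIdeal n m k) : x ∈ powIdeal n m k := by
  intro α hα
  have := hx (Finsupp.single k m + α) (by
    intro j hj
    have : k ≠ j := by rintro rfl; omega
    simpa [Finsupp.single_apply, this] using hα j hj)
  rwa [X_pow_eq, coeff_add_monomial_mul, one_mul] at this

lemma powIdeal_succ (m : ℕ) (k : Fin n) :
    powIdeal n m (k + 1) = powIdeal n m k ⊔ Ideal.span {X k ^ m} := by
  apply le_antisymm
  · intro h hh
    let q : MvPowerSeries (Fin n) ℂ := fun α => coeff (Finsupp.single k m + α) h
    have hq : ∀ α, coeff α q = coeff (Finsupp.single k m + α) h := fun _ => rfl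
    refine Submodule.mem_sup.2 ⟨h - X k ^ m * q, ?_, X k ^ m * q,
      Ideal.mul_mem_right _ _ (Ideal.mem_span_singleton_self _), by ring⟩
    intro α hα
    rw [map_sub]
    by_cases hk : α k < m
    · rw [hh α, X_pow_eq, coeff_monomial_mul, if_neg, sub_zero]
      · intro hle
        have := hle k
        simp at this
        omega
      · intro j hj
        rcases Nat.lt_succ_iff_lt_or_eq.1 hj with h' | h'
        · exact hα j h'
        · rwa [Fin.ext h']
    · have hle : Finsupp.single k m ≤ α := by
        rw [Finsupp.single_le_iff]; omega
      obtain ⟨β, rfl⟩ := exists_add_of_le hle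
      rw [X_pow_eq, coeff_add_monomial_mul, one_mul, hq, sub_self]
  · refine sup_le ?_ ?_
    · intro h hh α hα
      exact hh α fun j hj => hα j (by omega)
    · rw [Ideal.span_singleton_le_iff_mem]
      intro α hα
      classical
      rw [X_pow_eq, coeff_monomial, if_neg]
      rintro rfl
      have := hα k (by omega)
      simp at this
end series

/-- **Koszul syzygies of the Jacobian ideal**: if `Σᵢ ∂ᵢ(f)·gᵢ = 0` then
`(g₁,…,gₙ)` lies in the `R`-submodule of `Rⁿ` generated by the Koszul relations
`∂ⱼ(f)·eᵢ − ∂ᵢ(f)·eⱼ` for `i < j`. -/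
theorem koszul_syzygies (n : ℕ) (hn : 1 ≤ n) (f : MvPowerSeries (Fin n) ℂ)
    (hf0 : MvPowerSeries.constantCoeff f = 0)
    (m : ℕ) (hm : 1 ≤ m) (hiso : mx n ^ m ≤ Jf n f)
    (g : Fin n → MvPowerSeries (Fin n) ℂ)
    (hg : ∑ i : Fin n, pd i f * g i = 0) :
    g ∈ Submodule.span (MvPowerSeries (Fin n) ℂ)
      {v : Fin n → MvPowerSeries (Fin n) ℂ |
        ∃ i j : Fin n, i < j ∧
          v = Pi.single i (pd j f) - Pi.single j (pd i f)} := by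
  refine koszul_final (fun i => pd i f) _ ?_ g ?_
  · intro i j hij
    exact Submodule.subset_span ⟨i, j, hij, rfl⟩
  exact koszul_h1 (fun i => pd i f) (powIdeal n m) (fun k => MvPowerSeries.X k ^ m)
    (powIdeal_zero m) (powIdeal_succ m) (powIdeal_reg m)
    (fun k => hiso (Ideal.pow_mem_pow (Ideal.subset_span (Set.mem_range_self k)) m)) g hg
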